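/- arXiv:2501.06696 — 3 statements merged into one kernel-verified Lean document; each statement's English description precedes it below -/
import Mathlib

section
/- Let R be a commutative ring with identity and M an R-module. Then M is a nil-M-cyclic module (i.e., there exist r ∈ √Ann_R(M) and x ∈ M with M = Rx + rM) if and only if M is a cyclic module (i.e., M = Rx for some x ∈ M). -/
open Pointwise

/-- `M` is nil-`M`-cyclic iff `M` is cyclic. -/
theorem nil_cyclic_iff_cyclic {R M : Type*} [CommRing R] [AddCommGroup M] [Module R M] :
    (∃ r : R, (∃ n : ℕ, 0 < n ∧ ∀ m : M, r ^ n • m = 0) ∧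
      ∃ x : M, (⊤ : Submodule R M) = Submodule.span R {x} ⊔ r • (⊤ : Submodule R M)) ↔
    ∃ x : M, (⊤ : Submodule R M) = Submodule.span R {x} := by
  constructor
  · rintro ⟨r, ⟨n, -, hn⟩, x, hx⟩
    refine ⟨x, ?_⟩
    have key : ∀ k : ℕ, ∀ m : M, ∃ m' : M, m - r ^ k • m' ∈ Submodule.span R {x} := by
      intro k
      induction k with
      | zero => intro m; exact ⟨m, by simp⟩
      | succ k ih =>
        intro m
        obtain ⟨m', h⟩ := ih m
        have hm : m' ∈ Submodule.span R {x} ⊔ r • (⊤ : Submodule R M) := by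
          rw [← hx]; trivial
        obtain ⟨y, hy, z, hz, hyz⟩ := Submodule.mem_sup.mp hm
        obtain ⟨w, -, hw⟩ := (Submodule.mem_smul_pointwise_iff_exists _ _ _).mp hz
        refine ⟨w, ?_⟩
        have e : m - r ^ (k + 1) • w = (m - r ^ k • m') + r ^ k • y := by
          rw [← hyz, ← hw, smul_add, pow_succ, mul_smul]
          abel
        rw [e]
        exact Submodule.add_mem _ h (Submodule.smul_mem _ _ hy)
    symm
    rw [eq_top_iff]
    intro m _
    obtain ⟨m', h⟩ := key n m
    simpa [hn] using h
  · rintro ⟨x, hx⟩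
    exact ⟨0, ⟨1, one_pos, by simp⟩, x, by rw [← hx]; simp⟩
end

section
/- Let R be a commutative ring with identity and M an R-module. If for every submodule N of M the quotient M/N is nil-M-finitely cogenerated, then M is a nil-M-Artinian module. -/
open Pointwise

universe u

/-- If every homomorphic image `M/N` of `M` is nil-`M`-finitely cogenerated, then `M` is a
nil-`M`-Artinian module. -/
theorem nil_artinian_of_forall_nil_fcog {R M : Type*} [CommRing R] [AddCommGroup M] [Module R M]
    (h : ∀ N : Submodule R M, ∃ r : R, (∃ n : ℕ, 0 < n ∧ ∀ m : M, r ^ n • m = 0) ∧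
      ∀ (ι : Type u) (F : ι → Submodule R M), N = (⨅ i, F i) →
        ∃ J : Finset ι, N = (⨅ i ∈ J, F i) ⊓ Submodule.torsionBy R M r) :
    ∃ r : R, (∃ n : ℕ, 0 < n ∧ ∀ m : M, r ^ n • m = 0) ∧
      ∀ N : ℕ → Submodule R M, Antitone N →
        ∃ t : ℕ, ∀ i : ℕ, N t ⊓ Submodule.torsionBy R M r ≤ N (t + i) := by
  have key : ∀ N : Submodule R M, ∃ r : R, (∃ n : ℕ, 0 < n ∧ ∀ m : M, r ^ n • m = 0) ∧
      N ≤ Submodule.torsionBy R M r ∧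
      ∀ F : ℕ → Submodule R M, Antitone F → N = (⨅ i, F i) →
        ∃ t : ℕ, ∀ x ∈ F t, r • x = 0 → x ∈ N := by
    intro N
    obtain ⟨r, hr, hF⟩ := h N
    refine ⟨r, hr, ?_, ?_⟩
    · obtain ⟨J, hJ⟩ := hF PUnit (fun _ => N) (by simp)
      exact hJ.le.trans inf_le_right
    · intro F hanti hN
      obtain ⟨J, hJ⟩ := hF (ULift ℕ) (fun i => F i.down) (by
        rw [hN]
        exact (Equiv.ulift.iInf_comp (g := F)).symm)
      refine ⟨J.sup ULift.down, fun x hx hrx => ?_⟩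
      rw [hJ]
      refine ⟨?_, (Submodule.mem_torsionBy_iff r x).2 hrx⟩
      simp only [SetLike.mem_coe, Submodule.mem_iInf]
      intro i hi
      exact hanti (Finset.le_sup (f := ULift.down) hi) hx
  obtain ⟨r₀, ⟨n₀, _, hn₀⟩, _, h₀⟩ := key ⊥
  refine ⟨0, ⟨1, one_pos, by simp⟩, fun N hanti => ?_⟩
  obtain ⟨r, _, hle, hr⟩ := key (⨅ i, N i)
  obtain ⟨t, ht⟩ := hr N hanti rfl
  obtain ⟨s, hs⟩ := h₀ (fun i => (N (t + i)).map (LinearMap.lsmul R M r))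
    (fun a b hab => Submodule.map_mono (hanti (by omega))) (by
      symm
      rw [eq_bot_iff]
      intro x hx
      simp only [Submodule.mem_iInf, Submodule.mem_map, LinearMap.lsmul_apply] at hx
      obtain ⟨y, hy, hyx⟩ := hx 0
      have hyN : y ∈ ⨅ i, N i := by
        rw [Submodule.mem_iInf]
        intro i
        obtain ⟨z, hz, hzx⟩ := hx i
        have h1 : y - z ∈ ⨅ i, N i := by
          apply ht
          · exact sub_mem hy (hanti (by omega) hz)
          · rw [smul_sub, hyx, hzx, sub_self]
        have h2 := add_mem ((Submodule.mem_iInf _).1 h1 i)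
          (hanti (show i ≤ t + i by omega) hz)
        simpa using h2
      have h3 := (Submodule.mem_torsionBy_iff r y).1 (hle hyN)
      rw [← hyx, h3]
      exact Submodule.zero_mem _)
  have hzero : ∀ n : ℕ, ∀ x ∈ (N (t + s)).map (LinearMap.lsmul R M r),
      r₀ ^ n • x = 0 → x = 0 := by
    intro n
    induction n with
    | zero => intro x _ hx; simpa using hx
    | succ k ih =>
      intro x hx hxk
      have h1 : r₀ • x = 0 := ih _ (Submodule.smul_mem _ _ hx) (by
        rw [smul_smul, ← pow_succ]; exact hxk)
      simpa using hs x hx h1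
  refine ⟨t + s, fun i x hx => ?_⟩
  have hx1 : x ∈ N (t + s) := hx.1
  have h4 : r • x = 0 := hzero n₀ _ (Submodule.mem_map.2 ⟨x, hx1, rfl⟩) (hn₀ _)
  exact (Submodule.mem_iInf _).1 (ht x (hanti (by omega) hx1) h4) _
end

section
/- Let R be a commutative ring with identity and M an R-module. Suppose there exists r ∈ √Ann_R(M) such that every non-empty collection of submodules of M of the form K ∩ (0 :_M r) has a minimal element with respect to inclusion. Then for every submodule N of M, the quotient M/N is weakly nil-M-finitely cogenerated. -/
open Pointwise

universe u

/-- If there is `r ∈ √Ann M` such that every non-empty collection of submodules of `M` of the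
form `K ∩ (0 :_M r)` has a minimal element, then every homomorphic image `M/N` of `M` is
weakly nil-`M`-finitely cogenerated. -/
theorem weakly_nil_fcog_of_min {R M : Type*} [CommRing R] [AddCommGroup M] [Module R M]
    (h : ∃ r : R, (∃ n : ℕ, 0 < n ∧ ∀ m : M, r ^ n • m = 0) ∧
      ∀ S : Set (Submodule R M), S.Nonempty →
        (∀ X ∈ S, ∃ K : Submodule R M, X = K ⊓ Submodule.torsionBy R M r) →
        ∃ X ∈ S, ∀ Y ∈ S, Y ≤ X → Y = X) :
    ∀ N : Submodule R M, ∃ r : R, (∃ n : ℕ, 0 < n ∧ ∀ m : M, r ^ n • m = 0) ∧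
      ∀ (ι : Type u) (F : ι → Submodule R M), N = (⨅ i, F i) →
        ∃ J : Finset ι, (⨅ i ∈ J, F i) ⊓ Submodule.torsionBy R M r =
          N ⊓ Submodule.torsionBy R M r := by
  classical
  obtain ⟨r, hr, hmin⟩ := h
  intro N
  refine ⟨r, hr, ?_⟩
  intro ι F hN
  obtain ⟨X, ⟨J, rfl⟩, hJ⟩ := hmin
    (Set.range fun J : Finset ι => (⨅ i ∈ J, F i) ⊓ Submodule.torsionBy R M r)
    (Set.range_nonempty _) (by rintro X ⟨J, rfl⟩; exact ⟨_, rfl⟩)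
  refine ⟨J, le_antisymm ?_ ?_⟩
  · refine le_inf ?_ inf_le_right
    rw [hN]
    refine le_iInf fun i => ?_
    have h1 := hJ _ ⟨insert i J, rfl⟩ (inf_le_inf_right _
      (biInf_mono fun j hj => Finset.mem_insert_of_mem hj))
    have h2 : (⨅ j ∈ insert i J, F j) ≤ F i := iInf₂_le i (Finset.mem_insert_self i J)
    exact h1.symm.le.trans (inf_le_left.trans h2)
  · rw [hN]
    exact inf_le_inf_right _ (le_iInf₂ fun i _ => iInf_le F i)
end
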